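/- Under the algorithmic setting below, write the set K = {k₀, k₁, k₂, ...} in increasing order. Then r̄_{k_{i+1}} ≤ η r̄_{k_i} for all i for which k_{i+1} exists, and the following three statements are equivalent: (i) K is an infinite set; (ii) lim_{k→∞, k∈K} ‖r(x^k)‖ = 0; (iii) liminf_{k→∞} ‖r(x^k)‖ = 0. -/

import Mathlib

open scoped RealInnerProductSpace
open Filter Metric

noncomputable section

/-- The convex subdifferential of `g` at `y`. -/
def subdiff {n : ℕ} (g : EuclideanSpace ℝ (Fin n) → ℝ) (y : EuclideanSpace ℝ (Fin n)) :
    Set (EuclideanSpace ℝ (Fin n)) :=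
  {v | ∀ z, g y + ⟪v, z - y⟫ ≤ g z}

/-- The proximity operator `prox_g(z)`, the (unique, for convex `g`) minimizer of
`y ↦ g y + (1/2)‖y − z‖²`. -/
noncomputable def proxPt {n : ℕ} (g : EuclideanSpace ℝ (Fin n) → ℝ)
    (z : EuclideanSpace ℝ (Fin n)) : EuclideanSpace ℝ (Fin n) :=
  Classical.epsilon fun p => ∀ y, g p + (1 / 2) * ‖p - z‖ ^ 2 ≤ g y + (1 / 2) * ‖y - z‖ ^ 2

/-- The residual (prox-gradient) mapping `r(x) = x − prox_φ(x − ∇f(x))`. -/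
noncomputable def resid {n : ℕ} (f φ : EuclideanSpace ℝ (Fin n) → ℝ)
    (x : EuclideanSpace ℝ (Fin n)) : EuclideanSpace ℝ (Fin n) :=
  x - proxPt φ (x - gradient f x)

/-- The smallest eigenvalue of a symmetric operator on ℝᵐ, as the infimum of its quadratic
form over the unit sphere. -/
noncomputable def lambdaMin {m : ℕ} (T : EuclideanSpace ℝ (Fin m) →L[ℝ] EuclideanSpace ℝ (Fin m)) :
    ℝ :=
  ⨅ u : {u : EuclideanSpace ℝ (Fin m) // ‖u‖ = 1}, ⟪T u.1, u.1⟫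

/-!
Suppose only finitely many records `‖r(xᵏ)‖ ≤ η r̄ₖ₋₁` are set. Then `r̄` is eventually constant and
`‖r(xᵏ)‖` stays away from `0`, so the acceptance test makes `F` decrease in proportion to the
length of each accepted step; as `F` is bounded below, the iterates converge. The Hessians are then
bounded along the run, and an iteration with large `μₖ` is successful: its step is small, and the
predicted reduction, of order `μₖ ‖dᵏ‖²`, dominates the second-order Taylor error. Hence `ν` stays
bounded and infinitely many iterations are successful. Along these `dᵏ = xᵏ⁺¹ - xᵏ → 0`, and
`‖r(xᵏ)‖` is bounded by a multiple of `‖dᵏ‖`, a contradiction.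

So `K` is always infinite. Statement (ii) alone could not yield this: the limit along `k ∈ K` is
vacuous when `K` is finite.
-/

section Proximity

theorem exists_affine_le_of_convexOn {E : Type*} [NormedAddCommGroup E] [NormedSpace ℝ E]
    {φ : E → ℝ} (hφ : ConvexOn ℝ Set.univ φ) (hφc : LowerSemicontinuous φ) :
    ∃ (l : E →L[ℝ] ℝ) (c : ℝ), ∀ y, l y + c ≤ φ y := by
  obtain ⟨l, c, hle, -⟩ := ConvexOn.exists_affine_le_of_lt (𝕜 := ℝ) (Set.mem_univ 0)
    (sub_one_lt (φ 0)) isClosed_univ (hφc.lowerSemicontinuousOn _) hφ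
  exact ⟨l, c, fun y => hle ⟨y, Set.mem_univ y⟩⟩

theorem tendsto_add_half_norm_sub_sq_cocompact {E : Type*} [NormedAddCommGroup E]
    [NormedSpace ℝ E] [ProperSpace E] {φ : E → ℝ} {l : E →L[ℝ] ℝ} {c : ℝ}
    (hφ : ∀ y, l y + c ≤ φ y) (z : E) :
    Tendsto (fun y => φ y + 1 / 2 * ‖y - z‖ ^ 2) (cocompact E) atTop := by
  have hnorm : Tendsto (fun y => ‖y - z‖) (cocompact E) atTop := by
    simpa only [dist_eq_norm] using tendsto_dist_right_cocompact_atTop z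
  refine tendsto_atTop_mono (fun y => ?_)
    (tendsto_atTop_add_const_right _ (l z + c - (‖l‖ + 1) ^ 2 / 2) hnorm)
  have hl : -(‖l‖ * ‖y - z‖) ≤ l y - l z := by
    rw [← map_sub]
    exact (abs_le.1 (l.le_opNorm (y - z))).1
  linarith [hφ y, sq_nonneg (‖y - z‖ - (‖l‖ + 1))]

theorem continuous_of_convexOn_univ {E : Type*} [NormedAddCommGroup E] [NormedSpace ℝ E]
    [FiniteDimensional ℝ E] {φ : E → ℝ} (hφ : ConvexOn ℝ Set.univ φ) : Continuous φ :=
  continuousOn_univ.1 (hφ.continuousOn isOpen_univ)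

variable {n : ℕ} {φ : EuclideanSpace ℝ (Fin n) → ℝ}

theorem proxPt_minimizes (hφ : ConvexOn ℝ Set.univ φ) (z y : EuclideanSpace ℝ (Fin n)) :
    φ (proxPt φ z) + 1 / 2 * ‖proxPt φ z - z‖ ^ 2 ≤ φ y + 1 / 2 * ‖y - z‖ ^ 2 := by
  have hφc := continuous_of_convexOn_univ hφ
  obtain ⟨l, c, hle⟩ := exists_affine_le_of_convexOn hφ hφc.lowerSemicontinuous
  have hex : ∃ p, ∀ y, φ p + 1 / 2 * ‖p - z‖ ^ 2 ≤ φ y + 1 / 2 * ‖y - z‖ ^ 2 :=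
    Continuous.exists_forall_le (by fun_prop) (tendsto_add_half_norm_sub_sq_cocompact hle z)
  exact Classical.epsilon_spec hex y

/- Compare `p = proxPt φ z` with the points `p + t • (y - p)` of the segment to `y` and let
`t → 0`. -/
theorem inner_sub_proxPt_le (hφ : ConvexOn ℝ Set.univ φ) (z y : EuclideanSpace ℝ (Fin n)) :
    ⟪z - proxPt φ z, y - proxPt φ z⟫ ≤ φ y - φ (proxPt φ z) := by
  set p := proxPt φ z with hp
  have hseg : ∀ t ∈ Set.Ioc (0 : ℝ) 1,
      ⟪z - p, y - p⟫ ≤ φ y - φ p + t * (‖y - p‖ ^ 2 / 2) := by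
    rintro t ⟨ht0, ht1⟩
    have hmin := proxPt_minimizes hφ z (p + t • (y - p))
    have hconv : φ (p + t • (y - p)) ≤ (1 - t) * φ p + t * φ y := by
      have := hφ.2 (Set.mem_univ p) (Set.mem_univ y) (sub_nonneg.2 ht1) ht0.le
        (sub_add_cancel 1 t)
      rwa [show (1 - t) • p + t • y = p + t • (y - p) by module] at this
    have hexpand : ‖p + t • (y - p) - z‖ ^ 2 =
        ‖p - z‖ ^ 2 - 2 * (t * ⟪z - p, y - p⟫) + t ^ 2 * ‖y - p‖ ^ 2 := by
      rw [add_sub_right_comm, norm_add_sq_real, inner_smul_right, norm_smul, mul_pow,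
        Real.norm_eq_abs, sq_abs, ← neg_sub z p, inner_neg_left]
      ring
    rw [hexpand, ← hp] at hmin
    refine le_of_mul_le_mul_left ?_ ht0
    linarith
  have hlim : Tendsto (fun t : ℝ => φ y - φ p + t * (‖y - p‖ ^ 2 / 2)) (nhdsWithin 0 (Set.Ioi 0))
      (nhds (φ y - φ p)) := by
    have hcont : Continuous fun t : ℝ => φ y - φ p + t * (‖y - p‖ ^ 2 / 2) := by fun_prop
    simpa using (hcont.tendsto 0).mono_left nhdsWithin_le_nhds
  exact ge_of_tendsto hlim (eventually_of_mem (Ioc_mem_nhdsGT one_pos) hseg)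

theorem lipschitzWith_one_proxPt (hφ : ConvexOn ℝ Set.univ φ) : LipschitzWith 1 (proxPt φ) := by
  refine LipschitzWith.mk_one fun z w => ?_
  rw [dist_eq_norm, dist_eq_norm]
  set p := proxPt φ z
  set s := proxPt φ w
  have hfirm : ‖p - s‖ ^ 2 ≤ ⟪z - w, p - s⟫ := by
    have hsum : ⟪z - p, s - p⟫ + ⟪w - s, p - s⟫ = ‖p - s‖ ^ 2 - ⟪z - w, p - s⟫ := by
      rw [← real_inner_self_eq_norm_sq]
      simp only [inner_sub_left, inner_sub_right]
      ring
    linarith [inner_sub_proxPt_le hφ z s, inner_sub_proxPt_le hφ w p]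
  rcases (norm_nonneg (p - s)).eq_or_lt with h0 | hpos
  · exact h0 ▸ norm_nonneg _
  · refine le_of_mul_le_mul_right ?_ hpos
    linarith [real_inner_le_norm (z - w) (p - s), sq ‖p - s‖]

theorem norm_resid_le (hφ : ConvexOn ℝ Set.univ φ) (f : EuclideanSpace ℝ (Fin n) → ℝ)
    (x y : EuclideanSpace ℝ (Fin n))
    (B : EuclideanSpace ℝ (Fin n) →L[ℝ] EuclideanSpace ℝ (Fin n)) :
    ‖resid f φ x‖ ≤
      ‖y - proxPt φ (y - gradient f x - B (y - x))‖ + (2 + ‖B‖) * ‖y - x‖ := by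
  set p := proxPt φ (y - gradient f x - B (y - x))
  set p₀ := proxPt φ (x - gradient f x) with hp₀
  have hprox : ‖p - p₀‖ ≤ ‖y - x‖ + ‖B (y - x)‖ :=
    calc ‖p - p₀‖ ≤ ‖(y - gradient f x - B (y - x)) - (x - gradient f x)‖ := by
          simpa only [NNReal.coe_one, one_mul] using (lipschitzWith_one_proxPt hφ).norm_sub_le _ _
      _ = ‖(y - x) - B (y - x)‖ := by congr 1; abel
      _ ≤ ‖y - x‖ + ‖B (y - x)‖ := norm_sub_le _ _
  calc ‖resid f φ x‖ = ‖(y - p) + ((p - p₀) - (y - x))‖ := by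
        rw [resid, ← hp₀]; congr 1; abel
    _ ≤ ‖y - p‖ + (‖p - p₀‖ + ‖y - x‖) :=
        (norm_add_le _ _).trans (by gcongr; exact norm_sub_le _ _)
    _ ≤ ‖y - p‖ + (2 + ‖B‖) * ‖y - x‖ := by linarith [B.le_opNorm (y - x)]

end Proximity

section SecondOrder

theorem contDiff_gradient {E : Type*} [NormedAddCommGroup E] [InnerProductSpace ℝ E]
    [CompleteSpace E] {f : E → ℝ} (hf : ContDiff ℝ 2 f) : ContDiff ℝ 1 (gradient f) := by
  -- `toDual` is typed as conjugate-linear even over `ℝ`, so `contDiff` does not apply directly.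
  let dualInv : StrongDual ℝ E →ₗᵢ[ℝ] E :=
    { toFun := (InnerProductSpace.toDual ℝ E).symm
      map_add' := map_add _
      map_smul' := fun r l => by simp
      norm_map' := LinearIsometryEquiv.norm_map _ }
  exact dualInv.contDiff.comp (hf.fderiv_right (m := 1) (by norm_num [one_add_one_eq_two]))

theorem exists_eventually_norm_sub_sub_fderiv_le {E G : Type*} [NormedAddCommGroup E]
    [NormedSpace ℝ E] [NormedAddCommGroup G] [NormedSpace ℝ G] {f : E → G}
    (hf : ContDiff ℝ 2 f) (z : E) :
    ∃ L : ℝ, ∀ᶠ p : E × E in nhds (z, z),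
      ‖f p.2 - f p.1 - fderiv ℝ f p.1 (p.2 - p.1)‖ ≤ L * ‖p.2 - p.1‖ ^ 2 := by
  have hf' : ContDiff ℝ 1 (fderiv ℝ f) := hf.fderiv_right (by norm_num [one_add_one_eq_two])
  obtain ⟨L, t, ht, hL⟩ := (hf'.contDiffAt (x := z)).exists_lipschitzOnWith
  obtain ⟨s, hs, hst⟩ := Metric.mem_nhds_iff.1 ht
  refine ⟨L, ?_⟩
  filter_upwards [prod_mem_nhds (ball_mem_nhds z hs) (ball_mem_nhds z hs)]
  rintro ⟨x, y⟩ ⟨hx, hy⟩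
  have hball : segment ℝ x y ⊆ ball z s := (convex_ball z s).segment_subset hx hy
  have hfderiv : ∀ w ∈ segment ℝ x y, ‖fderiv ℝ f w - fderiv ℝ f x‖ ≤ L * ‖y - x‖ := fun w hw =>
    (hL.norm_sub_le (hst (hball hw)) (hst hx)).trans
      (mul_le_mul_of_nonneg_left (norm_sub_le_of_mem_segment hw) L.2)
  calc ‖f y - f x - fderiv ℝ f x (y - x)‖ ≤ L * ‖y - x‖ * ‖y - x‖ :=
        (convex_segment x y).norm_image_sub_le_of_norm_fderiv_le'
          (fun w _ => (hf.differentiable two_ne_zero) w) hfderiv (left_mem_segment ℝ x y)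
          (right_mem_segment ℝ x y)
    _ = L * ‖y - x‖ ^ 2 := by ring

theorem abs_inner_apply_self_le {E : Type*} [NormedAddCommGroup E] [InnerProductSpace ℝ E]
    (B : E →L[ℝ] E) (v : E) : |⟪v, B v⟫| ≤ ‖B‖ * ‖v‖ ^ 2 :=
  calc |⟪v, B v⟫| ≤ ‖v‖ * ‖B v‖ := abs_real_inner_le_norm v (B v)
    _ ≤ ‖v‖ * (‖B‖ * ‖v‖) := by gcongr; exact B.le_opNorm v
    _ = ‖B‖ * ‖v‖ ^ 2 := by ring

theorem neg_norm_le_lambdaMin {m : ℕ}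
    (T : EuclideanSpace ℝ (Fin m) →L[ℝ] EuclideanSpace ℝ (Fin m)) : -‖T‖ ≤ lambdaMin T := by
  rcases isEmpty_or_nonempty {u : EuclideanSpace ℝ (Fin m) // ‖u‖ = 1} with h | h
  · simp [lambdaMin, Real.iInf_of_isEmpty]
  · refine le_ciInf fun u => ?_
    have hu := abs_inner_apply_self_le T u.1
    rw [u.2, one_pow, mul_one, real_inner_comm] at hu
    exact (abs_le.1 hu).1

end SecondOrder

section RealSequences

theorem tendsto_zero_of_mul_sq_le {ι : Type*} {l : Filter ι} {M D : ι → ℝ} {P Q : ℝ}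
    (hM : Tendsto M l atTop) (h : ∀ᶠ k in l, M k * D k ^ 2 ≤ P + Q * D k) :
    Tendsto D l (nhds 0) := by
  have hbound : Tendsto (fun k => (P + Q ^ 2) / (M k - 1)) l (nhds 0) :=
    (tendsto_atTop_add_const_right l (-1) hM).const_div_atTop _
  have hsq : Tendsto (fun k => D k ^ 2) l (nhds 0) := by
    refine squeeze_zero' (.of_forall fun k => sq_nonneg _) ?_ hbound
    filter_upwards [h, hM.eventually_gt_atTop 1] with k hk hMk
    rw [le_div_iff₀ (sub_pos.2 hMk)]
    nlinarith [sq_nonneg (D k - Q)]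
  refine (tendsto_zero_iff_abs_tendsto_zero D).2 ?_
  simpa [Function.comp_def, Real.sqrt_sq_eq_abs] using hsq.sqrt

theorem exists_tendsto_of_mul_dist_le_sub {X : Type*} [PseudoMetricSpace X] [CompleteSpace X]
    {x : ℕ → X} {v : ℕ → ℝ} {c : ℝ} (hc : 0 < c) (hv : BddBelow (Set.range v))
    (h : ∀ᶠ k in atTop, c * dist (x k) (x (k + 1)) ≤ v k - v (k + 1)) :
    ∃ z, Tendsto x atTop (nhds z) := by
  obtain ⟨b, hb⟩ := hv
  obtain ⟨k₀, hk₀⟩ := eventually_atTop.1 h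
  have hsum : Summable fun k => dist (x (k + k₀)) (x (k.succ + k₀)) := by
    refine summable_of_sum_range_le (c := (v k₀ - b) / c) (fun _ => dist_nonneg) fun N => ?_
    rw [le_div_iff₀' hc, Finset.mul_sum]
    calc ∑ i ∈ Finset.range N, c * dist (x (i + k₀)) (x (i.succ + k₀))
        ≤ ∑ i ∈ Finset.range N, (v (i + k₀) - v (i + 1 + k₀)) :=
          Finset.sum_le_sum fun i _ => by
            simpa only [Nat.succ_eq_add_one, add_right_comm i 1 k₀] using
              hk₀ (i + k₀) (Nat.le_add_left _ _)
      _ = v (0 + k₀) - v (N + k₀) := Finset.sum_range_sub' (fun i => v (i + k₀)) N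
      _ ≤ v k₀ - b := by rw [zero_add]; gcongr; exact hb ⟨N + k₀, rfl⟩
  obtain ⟨z, hz⟩ := cauchySeq_tendsto_of_complete (cauchySeq_of_summable_dist hsum)
  exact ⟨z, (tendsto_add_atTop_iff_nat k₀).1 hz⟩

end RealSequences

section RecordSequences

/-- `r` records the values of `u` that improve on the previous record by the factor `η`; this is
the relation between `‖r(xᵏ)‖` and `r̄ₖ`. -/
structure IsRecordSeq (η : ℝ) (u r : ℕ → ℝ) : Prop where
  zero : r 0 = u 0
  succ_of_le : ∀ k, u (k + 1) ≤ η * r k → r (k + 1) = u (k + 1)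
  succ_of_not_le : ∀ k, ¬u (k + 1) ≤ η * r k → r (k + 1) = r k

/-- The set `K` of the times, including time `0`, at which a new record is set. -/
def recordTimes (η : ℝ) (u r : ℕ → ℝ) : Set ℕ :=
  {0} ∪ {k | 1 ≤ k ∧ u k ≤ η * r (k - 1)}

theorem succ_mem_recordTimes {η : ℝ} {u r : ℕ → ℝ} {k : ℕ} :
    k + 1 ∈ recordTimes η u r ↔ u (k + 1) ≤ η * r k := by
  simp [recordTimes]

namespace IsRecordSeq

variable {η : ℝ} {u r : ℕ → ℝ} (h : IsRecordSeq η u r)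
include h

theorem eq_of_mem_recordTimes {k : ℕ} (hk : k ∈ recordTimes η u r) : r k = u k := by
  cases k with
  | zero => exact h.zero
  | succ k => exact h.succ_of_le k (succ_mem_recordTimes.1 hk)

theorem succ_eq_of_notMem_recordTimes {k : ℕ} (hk : k + 1 ∉ recordTimes η u r) :
    r (k + 1) = r k :=
  h.succ_of_not_le k (mt succ_mem_recordTimes.2 hk)

theorem succ_le_of_mem_recordTimes {k : ℕ} (hk : k + 1 ∈ recordTimes η u r) :
    r (k + 1) ≤ η * r k := by
  rw [h.eq_of_mem_recordTimes hk]
  exact succ_mem_recordTimes.1 hk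

theorem eq_of_forall_notMem_recordTimes {k j : ℕ} (hkj : k ≤ j)
    (hgap : ∀ i, k < i → i ≤ j → i ∉ recordTimes η u r) : r j = r k := by
  induction j, hkj using Nat.le_induction with
  | base => rfl
  | succ j hkj ih =>
    rw [h.succ_eq_of_notMem_recordTimes (hgap _ (by omega) le_rfl),
      ih fun i hki hij => hgap i hki (by omega)]

theorem le_mul_of_consecutive {k k' : ℕ} (hk' : k' ∈ recordTimes η u r) (hlt : k < k')
    (hgap : ∀ j ∈ recordTimes η u r, ¬(k < j ∧ j < k')) : r k' ≤ η * r k := by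
  obtain ⟨j, rfl⟩ : ∃ j, k' = j + 1 := ⟨k' - 1, by omega⟩
  rw [← h.eq_of_forall_notMem_recordTimes (Nat.lt_succ_iff.1 hlt)
    fun i hki hij hi => hgap i hi ⟨hki, by omega⟩]
  exact h.succ_le_of_mem_recordTimes hk'

variable (hu : ∀ k, 0 < u k)
include hu

theorem pos (k : ℕ) : 0 < r k := by
  induction k with
  | zero => exact h.zero ▸ hu 0
  | succ k ih =>
    by_cases hk : k + 1 ∈ recordTimes η u r
    · exact h.eq_of_mem_recordTimes hk ▸ hu _
    · exact h.succ_eq_of_notMem_recordTimes hk ▸ ih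

theorem antitone (hη : η ≤ 1) : Antitone r := by
  refine antitone_nat_of_succ_le fun k => ?_
  by_cases hk : k + 1 ∈ recordTimes η u r
  · exact (h.succ_le_of_mem_recordTimes hk).trans (mul_le_of_le_one_left (h.pos hu k).le hη)
  · exact (h.succ_eq_of_notMem_recordTimes hk).le

theorem tendsto_zero (hη : η < 1) (hK : (recordTimes η u r).Infinite) :
    Tendsto r atTop (nhds 0) := by
  have hbdd : BddBelow (Set.range r) := ⟨0, Set.forall_mem_range.2 fun k => (h.pos hu k).le⟩
  have hlim := tendsto_atTop_ciInf (h.antitone hu hη.le) hbdd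
  have hfreq : ∃ᶠ k in atTop, r (k + 1) ≤ η * r k := by
    refine frequently_atTop.2 fun N => ?_
    obtain ⟨k, hk, hNk⟩ := hK.exists_gt N
    obtain ⟨j, rfl⟩ : ∃ j, k = j + 1 := ⟨k - 1, by omega⟩
    exact ⟨j, by omega, h.succ_le_of_mem_recordTimes hk⟩
  have hle : ⨅ i, r i ≤ η * ⨅ i, r i :=
    le_of_tendsto_of_tendsto_of_frequently ((tendsto_add_atTop_iff_nat 1).2 hlim)
      (hlim.const_mul η) hfreq
  have hnonneg : 0 ≤ ⨅ i, r i := le_ciInf fun k => (h.pos hu k).le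
  rwa [show ⨅ i, r i = 0 by nlinarith] at hlim

theorem tendsto_zero_on_recordTimes (hη : η < 1) (hK : (recordTimes η u r).Infinite) :
    Tendsto u (atTop ⊓ 𝓟 (recordTimes η u r)) (nhds 0) :=
  ((h.tendsto_zero hu hη hK).mono_left inf_le_left).congr'
    (eventually_inf_principal.2 (.of_forall fun _ hk => h.eq_of_mem_recordTimes hk))

theorem liminf_eq_zero (hη : η < 1) (hK : (recordTimes η u r).Infinite) :
    liminf u atTop = 0 := by
  have hsmall : ∀ ε > 0, ∃ᶠ k in atTop, u k ≤ ε := fun ε hε => by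
    have hr := (h.tendsto_zero hu hη hK).eventually_le_const hε
    refine ((Nat.frequently_atTop_iff_infinite.2 hK).and_eventually hr).mono ?_
    rintro k ⟨hk, hle⟩
    rwa [← h.eq_of_mem_recordTimes hk]
  refine le_antisymm (le_of_forall_pos_le_add fun ε hε => ?_)
    (le_liminf_of_le (.of_frequently_le (hsmall 1 one_pos)) (.of_forall fun k => (hu k).le))
  rw [zero_add]
  exact liminf_le_of_frequently_le (hsmall ε hε) (isBoundedUnder_of ⟨0, fun k => (hu k).le⟩)

theorem exists_eventually_eq_of_finite (hK : (recordTimes η u r).Finite) :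
    ∃ c > 0, ∀ᶠ k in atTop, r k = c ∧ η * c < u k := by
  obtain ⟨N, hN⟩ := hK.bddAbove
  have hnotMem : ∀ k, N < k → k ∉ recordTimes η u r := fun k hk hmem =>
    absurd (hN hmem) (by omega)
  have hconst : ∀ k, N ≤ k → r k = r N := fun k hk =>
    h.eq_of_forall_notMem_recordTimes hk fun i hi _ => hnotMem i hi
  refine ⟨r N, h.pos hu N, ?_⟩
  filter_upwards [eventually_gt_atTop N] with k hk
  refine ⟨hconst k hk.le, ?_⟩
  obtain ⟨j, rfl⟩ : ∃ j, k = j + 1 := ⟨k - 1, by omega⟩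
  rw [← hconst j (by omega), ← not_le, ← succ_mem_recordTimes]
  exact hnotMem _ hk

end IsRecordSeq

end RecordSequences

section RegularizationParameter

variable {ν : ℕ → ℝ} {σ νbar : ℝ} {fails : ℕ → Prop}

theorem pos_of_updates (h0 : 0 < ν 0) (hσ : 0 < σ) (hfail : ∀ k, fails k → ν (k + 1) = σ * ν k)
    (hsucc : ∀ k, ¬fails k → 0 < ν k → 0 < ν (k + 1)) (k : ℕ) : 0 < ν k := by
  induction k with
  | zero => exact h0
  | succ k ih =>
    by_cases hk : fails k
    · exact hfail k hk ▸ mul_pos hσ ih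
    · exact hsucc k hk ih

theorem le_and_pos_of_ratio_update {ρ c σ' ν ν' νmin : ℝ} (hνmin : 0 < νmin) (hνbar : 0 < νbar)
    (hle : ρ ≤ c → ν' = min ν νbar) (hlt : c < ρ → ν' = min (max (σ' * ν) νmin) νbar) :
    ν' ≤ νbar ∧ (0 < ν → 0 < ν') := by
  rcases le_or_gt ρ c with hρ | hρ
  · exact hle hρ ▸ ⟨min_le_right _ _, fun hν => lt_min hν hνbar⟩
  · exact hlt hρ ▸ ⟨min_le_right _ _, fun _ => lt_min (hνmin.trans_le (le_max_right _ _)) hνbar⟩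

theorem exists_eventually_le_of_eventually_not_fails (hσ : 0 ≤ σ)
    (hfail : ∀ k, fails k → ν (k + 1) = σ * ν k) (hsucc : ∀ k, ¬fails k → ν (k + 1) ≤ νbar)
    (hlarge : ∀ᶠ k in atTop ⊓ comap ν atTop, ¬fails k) : ∃ V, ∀ᶠ k in atTop, ν k ≤ V := by
  obtain ⟨⟨N, M⟩, -, hlarge⟩ := (atTop_basis.inf (atTop_basis.comap ν)).eventually_iff.1 hlarge
  refine ⟨max νbar (σ * M), eventually_atTop.2 ⟨N + 1, fun k hk => ?_⟩⟩
  obtain ⟨j, rfl⟩ : ∃ j, k = j + 1 := ⟨k - 1, by omega⟩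
  by_cases hj : fails j
  · have hνM : ν j < M := not_le.1 fun hle => hlarge ⟨Nat.le_of_succ_le_succ hk, hle⟩ hj
    rw [hfail j hj]
    exact (mul_le_mul_of_nonneg_left hνM.le hσ).trans (le_max_right _ _)
  · exact (hsucc j hj).trans (le_max_left _ _)

theorem frequently_not_fails (hσ : 1 < σ) (hν : ∀ k, 0 < ν k)
    (hfail : ∀ k, fails k → ν (k + 1) = σ * ν k)
    (hlarge : ∀ᶠ k in atTop ⊓ comap ν atTop, ¬fails k) : ∃ᶠ k in atTop, ¬fails k := by
  intro hfails
  simp only [not_not] at hfails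
  obtain ⟨N, hN⟩ := eventually_atTop.1 hfails
  have hgrow : ∀ j, ν (N + j) = σ ^ j * ν N := fun j => by
    induction j with
    | zero => simp
    | succ j ih => rw [← add_assoc, hfail _ (hN _ (by omega)), ih]; ring
  have hν_top : Tendsto ν atTop atTop := by
    refine (tendsto_add_atTop_iff_nat N).1 ?_
    simp only [add_comm _ N, hgrow]
    exact (tendsto_pow_atTop_atTop_of_one_lt hσ).atTop_mul_const (hν N)
  rw [inf_eq_left.2 (tendsto_iff_comap.1 hν_top)] at hlarge
  exact (hfails.and hlarge).exists.elim fun _ hk => hk.2 hk.1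

end RegularizationParameter

/-- The data of a regularized proximal Newton method for minimizing `f + φ`, with model Hessian
`∇²f(xᵏ) + S(xᵏ) + νₖ r̄ₖ^δ I`: the two functions, the curvature shift `S`, the parameters and
the generated sequences. The requirements tying them together are collected in
`ProxNewtonMethod.IsRun`. -/
structure ProxNewtonMethod (n : ℕ) where
  f : EuclideanSpace ℝ (Fin n) → ℝ
  φ : EuclideanSpace ℝ (Fin n) → ℝ
  S : EuclideanSpace ℝ (Fin n) → EuclideanSpace ℝ (Fin n) →L[ℝ] EuclideanSpace ℝ (Fin n)
  (c₁ σ₂ η θ α νbar δ pmin κ : ℝ)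
  x : ℕ → EuclideanSpace ℝ (Fin n)
  xhat : ℕ → EuclideanSpace ℝ (Fin n)
  ν : ℕ → ℝ
  rbar : ℕ → ℝ

namespace ProxNewtonMethod

variable {n : ℕ} (P : ProxNewtonMethod n)

/-- The objective `F = f + φ`. -/
def F (y : EuclideanSpace ℝ (Fin n)) : ℝ := P.f y + P.φ y

/-- The stationarity measure `‖r(xᵏ)‖`. -/
def residNorm (k : ℕ) : ℝ := ‖resid P.f P.φ (P.x k)‖

/-- The regularization parameter `μₖ`. -/
def μ (k : ℕ) : ℝ := P.ν k * P.rbar k ^ P.δ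

/-- The Hessian `∇²f(xᵏ)`. -/
def hess (k : ℕ) : EuclideanSpace ℝ (Fin n) →L[ℝ] EuclideanSpace ℝ (Fin n) :=
  fderiv ℝ (gradient P.f) (P.x k)

/-- The regularized Hessian `Gₖ`. -/
def G (k : ℕ) : EuclideanSpace ℝ (Fin n) →L[ℝ] EuclideanSpace ℝ (Fin n) :=
  P.hess k + P.S (P.x k) + P.μ k • ContinuousLinearMap.id ℝ (EuclideanSpace ℝ (Fin n))

/-- The model of `F` around `xᵏ` with Hessian `B`: this is `qₖ` for `B = ∇²f(xᵏ)` and `q̂ₖ` for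
`B = Gₖ`. -/
def model (k : ℕ) (B : EuclideanSpace ℝ (Fin n) →L[ℝ] EuclideanSpace ℝ (Fin n))
    (y : EuclideanSpace ℝ (Fin n)) : ℝ :=
  P.f (P.x k) + ⟪gradient P.f (P.x k), y - P.x k⟫ + 1 / 2 * ⟪y - P.x k, B (y - P.x k)⟫ + P.φ y

/-- The residual `Rₖ(x̂ᵏ)` of the regularized subproblem. -/
def subresid (k : ℕ) : EuclideanSpace ℝ (Fin n) :=
  P.xhat k -
    proxPt P.φ (P.xhat k - gradient P.f (P.x k) - P.G k (P.xhat k - P.x k))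

/-- The trial step `dᵏ`. -/
def step (k : ℕ) : EuclideanSpace ℝ (Fin n) := P.xhat k - P.x k

/-- The predicted reduction. -/
def pred (k : ℕ) : ℝ := P.F (P.x k) - P.model k (P.hess k) (P.xhat k)

/-- The actual reduction. -/
def ared (k : ℕ) : ℝ := P.F (P.x k) - P.F (P.xhat k)

/-- The test by which iteration `k` is unsuccessful. -/
def Unsuccessful (k : ℕ) : Prop :=
  P.pred k ≤ P.pmin * (1 - P.θ) * ‖P.step k‖ * min (P.residNorm k) (P.residNorm k ^ P.κ) ∨
    P.ared k / P.pred k ≤ P.c₁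

/-- The set `K` of the iterations at which `r̄` is updated. -/
def K : Set ℕ := recordTimes P.η P.residNorm P.rbar

/-- The sequences in `P` are generated by the method. After a successful iteration `ν` may take
any value in `(0, νbar]`. -/
structure IsRun : Prop where
  contDiff : ContDiff ℝ 2 P.f
  convexOn : ConvexOn ℝ Set.univ P.φ
  bddBelow : BddBelow (Set.range P.F)
  inner_S_nonneg : ∀ y v, 0 ≤ ⟪v, P.S y v⟫
  isBoundedUnder_S : ∀ y, IsBoundedUnder (· ≤ ·) (nhds y) fun z => ‖P.S z‖
  c₁_pos : 0 < P.c₁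
  c₁_lt_one : P.c₁ < 1
  one_lt_σ₂ : 1 < P.σ₂
  η_pos : 0 < P.η
  η_lt_one : P.η < 1
  θ_lt_one : P.θ < 1
  α_pos : 0 < P.α
  pmin_pos : 0 < P.pmin
  pmin_lt : P.pmin < 1 / 2
  κ_nonneg : 0 ≤ P.κ
  ν_pos : ∀ k, 0 < P.ν k
  resid_ne_zero : ∀ k, resid P.f P.φ (P.x k) ≠ 0
  isRecordSeq : IsRecordSeq P.η P.residNorm P.rbar
  norm_subresid_le : ∀ k, ‖P.subresid k‖ ≤ P.θ * P.residNorm k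
  le_sub_model : ∀ k,
    P.α * P.μ k / 2 * ‖P.step k‖ ^ 2 ≤ P.F (P.x k) - P.model k (P.G k) (P.xhat k)
  of_unsuccessful : ∀ k, P.Unsuccessful k → P.x (k + 1) = P.x k ∧ P.ν (k + 1) = P.σ₂ * P.ν k
  of_successful : ∀ k, ¬P.Unsuccessful k → P.x (k + 1) = P.xhat k ∧ P.ν (k + 1) ≤ P.νbar

theorem pred_sub_ared_le {k : ℕ} {L : ℝ}
    (htaylor : P.f (P.xhat k) - P.f (P.x k) - ⟪gradient P.f (P.x k), P.step k⟫ ≤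
      L * ‖P.step k‖ ^ 2) :
    P.pred k - P.ared k ≤ (L + ‖P.hess k‖ / 2) * ‖P.step k‖ ^ 2 :=
  calc P.pred k - P.ared k
      = P.f (P.xhat k) - P.f (P.x k) - ⟪gradient P.f (P.x k), P.step k⟫
        - 1 / 2 * ⟪P.step k, P.hess k (P.step k)⟫ := by
        simp only [pred, ared, model, F, step]
        ring
    _ ≤ (L + ‖P.hess k‖ / 2) * ‖P.step k‖ ^ 2 := by
        linarith [(abs_le.1 (abs_inner_apply_self_le (P.hess k) (P.step k))).1]

namespace IsRun

variable {P} (h : P.IsRun)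
include h

theorem residNorm_pos (k : ℕ) : 0 < P.residNorm k :=
  norm_pos_iff.2 (h.resid_ne_zero k)

theorem μ_pos (k : ℕ) : 0 < P.μ k :=
  mul_pos (h.ν_pos k) (Real.rpow_pos_of_pos (h.isRecordSeq.pos h.residNorm_pos k) _)

theorem inner_G_ge (k : ℕ) (v : EuclideanSpace ℝ (Fin n)) :
    ⟪v, P.hess k v⟫ + P.μ k * ‖v‖ ^ 2 ≤ ⟪v, P.G k v⟫ := by
  have hS := h.inner_S_nonneg (P.x k) v
  simp only [G, add_apply, smul_apply, inner_add_right, inner_smul_right,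
    ContinuousLinearMap.id_apply, real_inner_self_eq_norm_sq]
  linarith

theorem norm_G_le (k : ℕ) : ‖P.G k‖ ≤ ‖P.hess k‖ + ‖P.S (P.x k)‖ + P.μ k := by
  have hid : ‖P.μ k • ContinuousLinearMap.id ℝ (EuclideanSpace ℝ (Fin n))‖ ≤ P.μ k := by
    rw [norm_smul, Real.norm_of_nonneg (h.μ_pos k).le]
    exact mul_le_of_le_one_right (h.μ_pos k).le ContinuousLinearMap.norm_id_le
  exact (norm_add_le _ _).trans (add_le_add (norm_add_le _ _) hid)

theorem mul_residNorm_le (k : ℕ) :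
    (1 - P.θ) * P.residNorm k ≤ (2 + ‖P.G k‖) * ‖P.step k‖ := by
  have hres : P.residNorm k ≤ ‖P.subresid k‖ + (2 + ‖P.G k‖) * ‖P.step k‖ :=
    norm_resid_le h.convexOn P.f (P.x k) (P.xhat k) (P.G k)
  linarith [h.norm_subresid_le k]

theorem norm_step_pos (k : ℕ) : 0 < ‖P.step k‖ := by
  have hpos : 0 < (2 + ‖P.G k‖) * ‖P.step k‖ :=
    (mul_pos (sub_pos.2 h.θ_lt_one) (h.residNorm_pos k)).trans_le (h.mul_residNorm_le k)
  exact pos_of_mul_pos_right hpos (by positivity)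

theorem le_pred (k : ℕ) : (1 + P.α) * P.μ k / 2 * ‖P.step k‖ ^ 2 ≤ P.pred k := by
  have hdecr := h.le_sub_model k
  have hG := h.inner_G_ge k (P.step k)
  simp only [pred, model, step] at hdecr hG ⊢
  linarith

theorem mul_sq_norm_step_le {k : ℕ} {v : EuclideanSpace ℝ (Fin n) →L[ℝ] ℝ} {c : ℝ}
    (hφ : ∀ y, v y + c ≤ P.φ y) (hμ : ‖P.hess k‖ ≤ P.μ k) :
    P.α * P.μ k / 2 * ‖P.step k‖ ^ 2 ≤
      (P.φ (P.x k) - (v (P.x k) + c)) + (‖v‖ + ‖gradient P.f (P.x k)‖) * ‖P.step k‖ := by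
  have hG : 0 ≤ ⟪P.step k, P.G k (P.step k)⟫ := by
    have := mul_nonneg (sub_nonneg.2 hμ) (sq_nonneg ‖P.step k‖)
    linarith [h.inner_G_ge k (P.step k),
      (abs_le.1 (abs_inner_apply_self_le (P.hess k) (P.step k))).1]
  have hv : -(‖v‖ * ‖P.step k‖) ≤ v (P.xhat k) - v (P.x k) := by
    rw [← map_sub]
    exact (abs_le.1 (v.le_opNorm (P.step k))).1
  have hgrad := (abs_le.1 (abs_real_inner_le_norm (gradient P.f (P.x k)) (P.step k))).1
  have hdecr := h.le_sub_model k
  simp only [F, model, step] at hdecr hG hv hgrad ⊢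
  linarith [hφ (P.xhat k)]

theorem pred_pos (k : ℕ) : 0 < P.pred k := by
  have := h.norm_step_pos k
  have := h.μ_pos k
  have := h.α_pos
  exact lt_of_lt_of_le (by positivity) (h.le_pred k)

theorem step_test_lt_pred {k : ℕ} (hG : 2 + ‖P.G k‖ ≤ (1 + P.α) * P.μ k) :
    P.pmin * (1 - P.θ) * ‖P.step k‖ * min (P.residNorm k) (P.residNorm k ^ P.κ) < P.pred k := by
  have hd := h.norm_step_pos k
  have hr := h.residNorm_pos k
  have hθ := sub_pos.2 h.θ_lt_one
  have hpmin := h.pmin_pos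
  have hlow : (1 - P.θ) * P.residNorm k ≤ (1 + P.α) * P.μ k * ‖P.step k‖ :=
    (h.mul_residNorm_le k).trans (mul_le_mul_of_nonneg_right hG hd.le)
  calc P.pmin * (1 - P.θ) * ‖P.step k‖ * min (P.residNorm k) (P.residNorm k ^ P.κ)
      ≤ P.pmin * (1 - P.θ) * ‖P.step k‖ * P.residNorm k := by gcongr; exact min_le_left _ _
    _ = P.pmin * ((1 - P.θ) * P.residNorm k * ‖P.step k‖) := by ring
    _ < 1 / 2 * ((1 - P.θ) * P.residNorm k * ‖P.step k‖) := by gcongr; exact h.pmin_lt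
    _ ≤ 1 / 2 * ((1 + P.α) * P.μ k * ‖P.step k‖ * ‖P.step k‖) :=
        mul_le_mul_of_nonneg_left (mul_le_mul_of_nonneg_right hlow hd.le) one_half_pos.le
    _ = (1 + P.α) * P.μ k / 2 * ‖P.step k‖ ^ 2 := by ring
    _ ≤ P.pred k := h.le_pred k

/- The remainder `pred - ared` of the second-order model is quadratic in the step with a constant
that does not involve `μₖ`, whereas `pred` grows with `μₖ`. -/
theorem not_unsuccessful_of_large_μ {k : ℕ} {L : ℝ} (hG : 2 + ‖P.G k‖ ≤ (1 + P.α) * P.μ k)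
    (hL : L + ‖P.hess k‖ / 2 < (1 - P.c₁) * P.μ k / 2)
    (htaylor : P.f (P.xhat k) - P.f (P.x k) - ⟪gradient P.f (P.x k), P.step k⟫ ≤
      L * ‖P.step k‖ ^ 2) : ¬P.Unsuccessful k := by
  refine not_or.2 ⟨(h.step_test_lt_pred hG).not_ge, not_le.2 ?_⟩
  rw [lt_div_iff₀ (h.pred_pos k)]
  have hμ_pred : P.μ k / 2 * ‖P.step k‖ ^ 2 ≤ P.pred k := by
    have := mul_nonneg (mul_pos h.α_pos (h.μ_pos k)).le (sq_nonneg ‖P.step k‖)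
    linarith [h.le_pred k]
  have hremainder : P.pred k - P.ared k < (1 - P.c₁) * P.pred k :=
    calc P.pred k - P.ared k ≤ (L + ‖P.hess k‖ / 2) * ‖P.step k‖ ^ 2 := P.pred_sub_ared_le htaylor
      _ < (1 - P.c₁) * P.μ k / 2 * ‖P.step k‖ ^ 2 := by
        have := h.norm_step_pos k
        gcongr
      _ = (1 - P.c₁) * (P.μ k / 2 * ‖P.step k‖ ^ 2) := by ring
      _ ≤ (1 - P.c₁) * P.pred k :=
        mul_le_mul_of_nonneg_left hμ_pred (sub_pos.2 h.c₁_lt_one).le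
  linarith

section LocalAnalysis

variable {l : Filter ℕ} {xs : EuclideanSpace ℝ (Fin n)} (hx : Tendsto P.x l (nhds xs))
include hx

theorem exists_eventually_norm_hess_le_and_norm_G_le :
    ∃ B, ∀ᶠ k in l, ‖P.hess k‖ ≤ B ∧ ‖P.G k‖ ≤ B + P.μ k := by
  have hhess : Tendsto P.hess l (nhds (fderiv ℝ (gradient P.f) xs)) :=
    (((contDiff_gradient h.contDiff).continuous_fderiv one_ne_zero).tendsto xs).comp hx
  obtain ⟨B₁, hB₁⟩ := hhess.norm.isBoundedUnder_le
  obtain ⟨B₂, hB₂⟩ := h.isBoundedUnder_S xs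
  refine ⟨B₁ + B₂, ?_⟩
  filter_upwards [eventually_map.1 hB₁, hx.eventually (eventually_map.1 hB₂)] with k h₁ h₂
  exact ⟨by linarith [norm_nonneg (P.S (P.x k))], by linarith [h.norm_G_le k]⟩

theorem tendsto_norm_step_zero (hμ : Tendsto P.μ l atTop) :
    Tendsto (fun k => ‖P.step k‖) l (nhds 0) := by
  have hφc := continuous_of_convexOn_univ h.convexOn
  obtain ⟨v, c, hle⟩ := exists_affine_le_of_convexOn h.convexOn hφc.lowerSemicontinuous
  have hgap := ((hφc.sub (v.continuous.add_const c)).tendsto xs).comp hx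
  have hgrad := (((contDiff_gradient h.contDiff).continuous.norm).tendsto xs).comp hx
  obtain ⟨B, hB⟩ := h.exists_eventually_norm_hess_le_and_norm_G_le hx
  obtain ⟨C, hC⟩ := hgap.isBoundedUnder_le
  obtain ⟨D, hD⟩ := hgrad.isBoundedUnder_le
  have hμ' : Tendsto (fun k => P.α * P.μ k / 2) l atTop :=
    (hμ.const_mul_atTop h.α_pos).atTop_div_const two_pos
  refine tendsto_zero_of_mul_sq_le (P := C) (Q := ‖v‖ + D) hμ' ?_
  filter_upwards [hB, eventually_map.1 hC, eventually_map.1 hD, hμ.eventually_ge_atTop B]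
    with k ⟨hBk, _⟩ hCk hDk hμk
  calc P.α * P.μ k / 2 * ‖P.step k‖ ^ 2
      ≤ (P.φ (P.x k) - (v (P.x k) + c)) + (‖v‖ + ‖gradient P.f (P.x k)‖) * ‖P.step k‖ :=
        h.mul_sq_norm_step_le hle (hBk.trans hμk)
    _ ≤ C + (‖v‖ + D) * ‖P.step k‖ := by gcongr; exacts [hCk, hDk]

theorem eventually_not_unsuccessful (hμ : Tendsto P.μ l atTop) :
    ∀ᶠ k in l, ¬P.Unsuccessful k := by
  have hxhat : Tendsto P.xhat l (nhds xs) := by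
    have hstep := tendsto_zero_iff_norm_tendsto_zero.2 (h.tendsto_norm_step_zero hx hμ)
    simpa [step] using hx.add hstep
  obtain ⟨L, hL⟩ := exists_eventually_norm_sub_sub_fderiv_le h.contDiff xs
  obtain ⟨B, hB⟩ := h.exists_eventually_norm_hess_le_and_norm_G_le hx
  have hc₁ := sub_pos.2 h.c₁_lt_one
  filter_upwards [hB, (hx.prodMk_nhds hxhat).eventually hL,
    (hμ.const_mul_atTop h.α_pos).eventually_ge_atTop (2 + B),
    (hμ.const_mul_atTop hc₁).eventually_gt_atTop (2 * L + B)]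
    with k ⟨hhess, hG⟩ htaylor hμB hμL
  refine h.not_unsuccessful_of_large_μ (L := L) (by linarith) (by linarith) ?_
  rw [inner_gradient_left]
  exact (le_abs_self _).trans htaylor

theorem tendsto_residNorm_zero {V : ℝ} (hμ : ∀ᶠ k in l, P.μ k ≤ V)
    (hstep : Tendsto (fun k => ‖P.step k‖) l (nhds 0)) : Tendsto P.residNorm l (nhds 0) := by
  obtain ⟨B, hB⟩ := h.exists_eventually_norm_hess_le_and_norm_G_le hx
  have hθ := sub_pos.2 h.θ_lt_one
  have hbound : Tendsto (fun k => (2 + (B + V)) / (1 - P.θ) * ‖P.step k‖) l (nhds 0) := by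
    simpa using hstep.const_mul ((2 + (B + V)) / (1 - P.θ))
  refine squeeze_zero' (.of_forall fun k => norm_nonneg _) ?_ hbound
  filter_upwards [hB, hμ] with k ⟨_, hG⟩ hμV
  rw [div_mul_eq_mul_div, le_div_iff₀' hθ]
  exact (h.mul_residNorm_le k).trans (by gcongr; linarith)

end LocalAnalysis

theorem mul_norm_x_succ_sub_le {k : ℕ} {ε : ℝ} (hε : 0 < ε) (hr : ε ≤ P.residNorm k) :
    P.c₁ * (P.pmin * (1 - P.θ) * min ε (ε ^ P.κ)) * ‖P.x (k + 1) - P.x k‖ ≤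
      P.F (P.x k) - P.F (P.x (k + 1)) := by
  by_cases hk : P.Unsuccessful k
  · simp [(h.of_unsuccessful k hk).1]
  · rw [(h.of_successful k hk).1]
    obtain ⟨hpred, hratio⟩ := not_or.1 hk
    have := h.pmin_pos
    have := sub_pos.2 h.θ_lt_one
    have := h.κ_nonneg
    calc P.c₁ * (P.pmin * (1 - P.θ) * min ε (ε ^ P.κ)) * ‖P.step k‖
        = P.c₁ * (P.pmin * (1 - P.θ) * ‖P.step k‖ * min ε (ε ^ P.κ)) := by ring
      _ ≤ P.c₁ * (P.pmin * (1 - P.θ) * ‖P.step k‖ *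
            min (P.residNorm k) (P.residNorm k ^ P.κ)) := by
          have := h.c₁_pos
          gcongr
      _ ≤ P.c₁ * P.pred k := mul_le_mul_of_nonneg_left (not_le.1 hpred).le h.c₁_pos.le
      _ ≤ P.ared k := ((lt_div_iff₀ (h.pred_pos k)).1 (not_le.1 hratio)).le

theorem exists_tendsto_x {ε : ℝ} (hε : 0 < ε) (hr : ∀ᶠ k in atTop, ε ≤ P.residNorm k) :
    ∃ xs, Tendsto P.x atTop (nhds xs) := by
  have hpmin := h.pmin_pos
  have hθ := sub_pos.2 h.θ_lt_one
  have hc₁ := h.c₁_pos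
  have hc : 0 < P.c₁ * (P.pmin * (1 - P.θ) * min ε (ε ^ P.κ)) := by positivity
  refine exists_tendsto_of_mul_dist_le_sub (v := P.F ∘ P.x) hc
    (h.bddBelow.mono (Set.range_comp_subset_range _ _)) ?_
  filter_upwards [hr] with k hk
  rw [dist_comm, dist_eq_norm]
  exact h.mul_norm_x_succ_sub_le hε hk

theorem K_infinite : P.K.Infinite := by
  intro hfin
  obtain ⟨c, hc, hev⟩ := h.isRecordSeq.exists_eventually_eq_of_finite h.residNorm_pos hfin
  have hηc : 0 < P.η * c := mul_pos h.η_pos hc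
  have hcδ : 0 < c ^ P.δ := Real.rpow_pos_of_pos hc _
  have hμ_eq : ∀ᶠ k in atTop, P.ν k * c ^ P.δ = P.μ k := hev.mono fun k hk => by rw [μ, hk.1]
  obtain ⟨xs, hxs⟩ := h.exists_tendsto_x hηc (hev.mono fun _ hk => hk.2.le)
  have hlarge : ∀ᶠ k in atTop ⊓ comap P.ν atTop, ¬P.Unsuccessful k :=
    h.eventually_not_unsuccessful (hxs.mono_left inf_le_left) <|
      ((tendsto_comap.mono_left inf_le_right).atTop_mul_const hcδ).congr'
        (hμ_eq.filter_mono inf_le_left)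
  obtain ⟨V, hV⟩ := exists_eventually_le_of_eventually_not_fails (zero_le_one.trans h.one_lt_σ₂.le)
    (fun k hk => (h.of_unsuccessful k hk).2) (fun k hk => (h.of_successful k hk).2) hlarge
  have hfreq := frequently_not_fails h.one_lt_σ₂ h.ν_pos
    (fun k hk => (h.of_unsuccessful k hk).2) hlarge
  set l := atTop ⊓ 𝓟 {k | ¬P.Unsuccessful k}
  have : l.NeBot := frequently_mem_iff_neBot.1 hfreq
  have hl : l ≤ atTop := inf_le_left
  have hstep : Tendsto (fun k => ‖P.step k‖) l (nhds 0) := by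
    have hdiff : Tendsto (fun k => ‖P.x (k + 1) - P.x k‖) l (nhds 0) := by
      simpa using ((((tendsto_add_atTop_iff_nat 1).2 hxs).sub hxs).norm).mono_left hl
    refine hdiff.congr' (eventually_inf_principal.2 (.of_forall fun k hk => ?_))
    simp only [step, (h.of_successful k hk).1]
  have hμ_le : ∀ᶠ k in l, P.μ k ≤ V * c ^ P.δ := by
    filter_upwards [hl hV, hl hμ_eq] with k hVk hμk
    exact hμk ▸ mul_le_mul_of_nonneg_right hVk hcδ.le
  have hresid := h.tendsto_residNorm_zero (hxs.mono_left hl) hμ_le hstep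
  exact hηc.not_ge (ge_of_tendsto hresid (hl (hev.mono fun _ hk => hk.2.le)))

end IsRun

end ProxNewtonMethod

section AffineComposition

variable {n m : ℕ} {ψ : EuclideanSpace ℝ (Fin m) → ℝ}
  {A : EuclideanSpace ℝ (Fin n) →L[ℝ] EuclideanSpace ℝ (Fin m)} {b : EuclideanSpace ℝ (Fin m)}
  {a : ℝ}

/-- The shift `Λ AᵀA`, with `Λ = a [-λ_min(∇²ψ(Ay - b))]₊`, which compensates the negative
curvature of `y ↦ ψ (A y - b)`. -/
def curvatureShift (ψ : EuclideanSpace ℝ (Fin m) → ℝ)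
    (A : EuclideanSpace ℝ (Fin n) →L[ℝ] EuclideanSpace ℝ (Fin m)) (b : EuclideanSpace ℝ (Fin m))
    (a : ℝ) (y : EuclideanSpace ℝ (Fin n)) :
    EuclideanSpace ℝ (Fin n) →L[ℝ] EuclideanSpace ℝ (Fin n) :=
  (a * max (-(lambdaMin (fderiv ℝ (gradient ψ) (A y - b)))) 0) •
    (ContinuousLinearMap.adjoint A).comp A

theorem inner_curvatureShift_nonneg (ha : 0 ≤ a) (y v : EuclideanSpace ℝ (Fin n)) :
    0 ≤ ⟪v, curvatureShift ψ A b a y v⟫ := by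
  simp only [curvatureShift, smul_apply, inner_smul_right, ContinuousLinearMap.comp_apply,
    ContinuousLinearMap.adjoint_inner_right, real_inner_self_eq_norm_sq]
  positivity

theorem isBoundedUnder_norm_curvatureShift (hψ : ContDiff ℝ 2 ψ) (ha : 0 ≤ a)
    (y : EuclideanSpace ℝ (Fin n)) :
    IsBoundedUnder (· ≤ ·) (nhds y) fun z => ‖curvatureShift ψ A b a z‖ := by
  have hhess := (contDiff_gradient hψ).continuous_fderiv one_ne_zero
  have hcont : Continuous fun z =>
      a * ‖fderiv ℝ (gradient ψ) (A z - b)‖ * ‖(ContinuousLinearMap.adjoint A).comp A‖ := by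
    fun_prop
  refine (hcont.tendsto y).isBoundedUnder_le.mono_le (.of_forall fun z => ?_)
  have hneg : -lambdaMin (fderiv ℝ (gradient ψ) (A z - b)) ≤
      ‖fderiv ℝ (gradient ψ) (A z - b)‖ := neg_le.1 (neg_norm_le_lambdaMin _)
  simp only [curvatureShift, norm_smul]
  rw [Real.norm_of_nonneg (by positivity)]
  gcongr
  exact max_le hneg (norm_nonneg _)

end AffineComposition

theorem stmt_4_general {n : ℕ} (P : ProxNewtonMethod n) (h : P.IsRun) :
    (∀ k ∈ P.K, ∀ k' ∈ P.K, k < k' → (∀ j ∈ P.K, ¬(k < j ∧ j < k')) →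
        P.rbar k' ≤ P.η * P.rbar k) ∧
    P.K.Infinite ∧
    Tendsto P.residNorm (atTop ⊓ 𝓟 P.K) (nhds 0) ∧
    liminf P.residNorm atTop = 0 :=
  ⟨fun _ _ _ hk' hlt hgap => h.isRecordSeq.le_mul_of_consecutive hk' hlt hgap, h.K_infinite,
    h.isRecordSeq.tendsto_zero_on_recordTimes h.residNorm_pos h.η_lt_one h.K_infinite,
    h.isRecordSeq.liminf_eq_zero h.residNorm_pos h.η_lt_one h.K_infinite⟩

/-- Lemma 3.4: writing `K = {k₀ < k₁ < ...}`, consecutive elements satisfy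
`r̄_{k_{i+1}} ≤ η r̄_{k_i}`, and the following are equivalent: (i) `K` is infinite;
(ii) `‖r(xᵏ)‖ → 0` along `k ∈ K`; (iii) `liminf_{k→∞} ‖r(xᵏ)‖ = 0`. -/
theorem stmt_4 {n m : ℕ}
    -- problem data: f(x) = ψ(Ax − b), F = f + φ bounded below, φ convex, ψ C²
    (ψ : EuclideanSpace ℝ (Fin m) → ℝ)
    (A : EuclideanSpace ℝ (Fin n) →L[ℝ] EuclideanSpace ℝ (Fin m))
    (b : EuclideanSpace ℝ (Fin m))
    (φ : EuclideanSpace ℝ (Fin n) → ℝ)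
    (hψ : ContDiff ℝ 2 ψ) (hφ : ConvexOn ℝ Set.univ φ)
    (f F : EuclideanSpace ℝ (Fin n) → ℝ)
    (hf : ∀ y, f y = ψ (A y - b)) (hF : ∀ y, F y = f y + φ y)
    (hFbdd : BddBelow (Set.range F))
    -- algorithm parameters
    (c₁ c₂ σ₁ σ₂ η θ α a νmin ν₀ νbar δ τ pmin κ : ℝ)
    (hc₁ : 0 < c₁) (hc₁' : c₁ < 1) (hc₂ : c₁ < c₂) (hc₂' : c₂ < 1)
    (hσ₁ : 0 < σ₁) (hσ₁' : σ₁ < 1) (hσ₂ : 1 < σ₂)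
    (hη : 0 < η) (hη' : η < 1) (hθ : 0 < θ) (hθ' : θ < 1)
    (hα : 0 < α) (hα' : α < 1) (ha : 1 ≤ a)
    (hνmin : 0 < νmin) (hν₀a : νmin ≤ ν₀) (hν₀b : ν₀ ≤ νbar)
    (hδ0 : 0 < δ) (hδ1 : δ ≤ 1) (hτ : δ ≤ τ)
    (hpmin : 0 < pmin) (hpmin' : pmin < 1 / 2) (hκ : 1 + δ < κ)
    -- iterates and regularization sequences
    (x xhat : ℕ → EuclideanSpace ℝ (Fin n)) (ν rbar μ : ℕ → ℝ)
    (hν0 : ν 0 = ν₀) (hrbar0 : rbar 0 = ‖resid f φ (x 0)‖)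
    (hμ : ∀ k, μ k = ν k * rbar k ^ δ)
    -- Λ_k, H_k + μ_k I =: G_k, the models q_k, q̂_k, and the subproblem residual R_k
    (Λ : ℕ → ℝ)
    (hΛ : ∀ k, Λ k = a * max (-(lambdaMin (fderiv ℝ (gradient ψ) (A (x k) - b)))) 0)
    (G : ℕ → EuclideanSpace ℝ (Fin n) →L[ℝ] EuclideanSpace ℝ (Fin n))
    (hG : ∀ k, G k = fderiv ℝ (gradient f) (x k)
        + Λ k • ((ContinuousLinearMap.adjoint A).comp A)
        + μ k • ContinuousLinearMap.id ℝ (EuclideanSpace ℝ (Fin n)))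
    (q qhat : ℕ → EuclideanSpace ℝ (Fin n) → ℝ)
    (hq : ∀ k y, q k y = f (x k) + ⟪gradient f (x k), y - x k⟫
        + (1 / 2) * ⟪y - x k, (fderiv ℝ (gradient f) (x k)) (y - x k)⟫ + φ y)
    (hqhat : ∀ k y, qhat k y = f (x k) + ⟪gradient f (x k), y - x k⟫
        + (1 / 2) * ⟪y - x k, (G k) (y - x k)⟫ + φ y)
    (R : ℕ → EuclideanSpace ℝ (Fin n) → EuclideanSpace ℝ (Fin n))
    (hR : ∀ k y, R k y = y - proxPt φ (y - gradient f (x k) - (G k) (y - x k)))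
    -- the inexactness criteria satisfied by x̂ᵏ
    (hinex1 : ∀ k, ‖R k (xhat k)‖ ≤
        θ * min ‖resid f φ (x k)‖ (‖resid f φ (x k)‖ ^ (1 + τ)))
    (hinex2 : ∀ k, α * μ k / 2 * ‖xhat k - x k‖ ^ 2 ≤ F (x k) - qhat k (xhat k))
    -- dᵏ, pred_k, ared_k, ρ_k
    (d : ℕ → EuclideanSpace ℝ (Fin n)) (hd : ∀ k, d k = xhat k - x k)
    (pred ared ρ : ℕ → ℝ)
    (hpred : ∀ k, pred k = F (x k) - q k (xhat k))
    (hared : ∀ k, ared k = F (x k) - F (xhat k))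
    (hρ : ∀ k, ρ k = ared k / pred k)
    -- update rules (unsuccessful / successful / highly successful iterations)
    (unsucc : ℕ → Prop)
    (hunsucc : ∀ k, unsucc k ↔
        pred k ≤ pmin * (1 - θ) * ‖d k‖ *
          min ‖resid f φ (x k)‖ (‖resid f φ (x k)‖ ^ κ) ∨ ρ k ≤ c₁)
    (hupd : ∀ k,
        (unsucc k → x (k + 1) = x k ∧ ν (k + 1) = σ₂ * ν k) ∧
        (¬unsucc k → x (k + 1) = xhat k ∧
          (ρ k ≤ c₂ → ν (k + 1) = min (ν k) νbar) ∧
          (c₂ < ρ k → ν (k + 1) = min (max (σ₁ * ν k) νmin) νbar)))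
    (hrbarupd : ∀ k,
        (‖resid f φ (x (k + 1))‖ ≤ η * rbar k → rbar (k + 1) = ‖resid f φ (x (k + 1))‖) ∧
        (¬‖resid f φ (x (k + 1))‖ ≤ η * rbar k → rbar (k + 1) = rbar k))
    -- no iterate is stationary (otherwise the algorithm terminates)
    (hrne : ∀ k, resid f φ (x k) ≠ 0)
    (K : Set ℕ)
    (hK : K = {0} ∪ {k | 1 ≤ k ∧ ‖resid f φ (x k)‖ ≤ η * rbar (k - 1)}) :
    (∀ k ∈ K, ∀ k' ∈ K, k < k' → (∀ j ∈ K, ¬(k < j ∧ j < k')) →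
        rbar k' ≤ η * rbar k) ∧
    List.TFAE [
      K.Infinite,
      Tendsto (fun k => ‖resid f φ (x k)‖) (atTop ⊓ 𝓟 K) (nhds 0),
      Filter.liminf (fun k => ‖resid f φ (x k)‖) atTop = 0] := by
  obtain ⟨rfl, rfl, rfl⟩ : f = _ ∧ F = _ ∧ μ = _ := ⟨funext hf, funext hF, funext hμ⟩
  obtain ⟨rfl, rfl⟩ : Λ = _ ∧ G = _ := ⟨funext hΛ, funext hG⟩
  obtain ⟨rfl, rfl, rfl⟩ : q = _ ∧ qhat = _ ∧ R = _ := ⟨funext₂ hq, funext₂ hqhat, funext₂ hR⟩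
  obtain ⟨rfl, rfl, rfl⟩ : d = _ ∧ pred = _ ∧ ared = _ := ⟨funext hd, funext hpred, funext hared⟩
  obtain ⟨rfl, rfl⟩ : ρ = _ ∧ unsucc = _ := ⟨funext hρ, funext fun k => propext (hunsucc k)⟩
  subst hK
  have hν k (hk) := le_and_pos_of_ratio_update hνmin (by linarith)
    ((hupd k).2 hk).2.1 ((hupd k).2 hk).2.2
  let P : ProxNewtonMethod n :=
    { f := fun y => ψ (A y - b), φ, S := curvatureShift ψ A b a, c₁, σ₂, η, θ, α, νbar, δ, pmin, κ,
      x, xhat, ν, rbar }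
  have hP : P.IsRun :=
    { contDiff := hψ.comp (by fun_prop), convexOn := hφ, bddBelow := hFbdd
      inner_S_nonneg := inner_curvatureShift_nonneg (by linarith)
      isBoundedUnder_S := isBoundedUnder_norm_curvatureShift hψ (by linarith)
      c₁_pos := hc₁, c₁_lt_one := hc₁', one_lt_σ₂ := hσ₂, η_pos := hη, η_lt_one := hη'
      θ_lt_one := hθ', α_pos := hα, pmin_pos := hpmin, pmin_lt := hpmin', κ_nonneg := by linarith
      ν_pos := pos_of_updates (by linarith) (by linarith) (fun k hk => ((hupd k).1 hk).2)
        fun k hk => (hν k hk).2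
      resid_ne_zero := hrne
      isRecordSeq := ⟨hrbar0, fun k => (hrbarupd k).1, fun k => (hrbarupd k).2⟩
      norm_subresid_le := fun k => (hinex1 k).trans (by gcongr; exact min_le_left _ _)
      le_sub_model := hinex2
      of_unsuccessful := fun k => (hupd k).1
      of_successful := fun k hk => ⟨((hupd k).2 hk).1, (hν k hk).1⟩ }
  obtain ⟨hle, hK, hlim, hliminf⟩ := stmt_4_general P hP
  exact ⟨hle, List.tfae_cons_cons.2 ⟨iff_of_true hK hlim,
    List.tfae_cons_cons.2 ⟨iff_of_true hlim hliminf, List.tfae_singleton _⟩⟩⟩
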